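/- arXiv:2211.07952 — 2 statements merged into one kernel-verified Lean document; each statement's English description precedes it below -/
import Mathlib

section
/- For every density operator ρ^{AB} on a finite-dimensional bipartite Hilbert space H^A⊗H^B, the equality 1 + Tr((ρ^{AB})²) = Tr((ρ^A)²) + Tr((ρ^B)²) holds if and only if ρ^{AB} = ρ^A ⊗ ρ^B with min{rank(ρ^A), rank(ρ^B)} = 1. Consequently, for q = 2, I_2(A_1:⋯:A_n) = 0 if and only if ρ^{A_1⋯A_n} is a product state with at most one of the reduced states ρ^{A_i} having rank greater than 1. -/
open scoped BigOperators ComplexOrder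
open Matrix

noncomputable section

/-- The function `x ↦ -x·log₂ x` (with the convention `0·log₂ 0 = 0`). -/
def negxlog2 (x : ℝ) : ℝ := -(x * Real.logb 2 x)

/-- The von Neumann entropy (base 2), `S(ρ) = -Tr(ρ log₂ ρ)`, computed as the sum of
`-λ log₂ λ` over the eigenvalues of a Hermitian matrix (junk value `0` otherwise). -/
def vnEntropy {n : Type} [Fintype n] [DecidableEq n] (ρ : Matrix n n ℂ) : ℝ :=
  if h : ρ.IsHermitian then ∑ i, negxlog2 (h.eigenvalues i) else 0

/-- The Tsallis q-entropy `S_q(ρ) = (1 - Tr ρ^q)/(q-1)`, computed via eigenvalues. -/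
def tsallisEntropy (q : ℝ) {n : Type} [Fintype n] [DecidableEq n] (ρ : Matrix n n ℂ) : ℝ :=
  if h : ρ.IsHermitian then (1 - ∑ i, (h.eigenvalues i) ^ q) / (q - 1) else 0

/-- A density operator: positive semidefinite with unit trace. -/
def IsDensity {n : Type} [Fintype n] [DecidableEq n] (ρ : Matrix n n ℂ) : Prop :=
  ρ.PosSemidef ∧ ρ.trace = 1

/-- rank-one projection `|ψ⟩⟨ψ|`. -/
def outer {α : Type} (ψ : α → ℂ) : Matrix α α ℂ :=
  fun a b => ψ a * (starRingEnd ℂ) (ψ b)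

section multi

variable {ι : Type} [Fintype ι] [DecidableEq ι] {d : ι → Type}
  [∀ i, Fintype (d i)] [∀ i, DecidableEq (d i)]

/-- Combine an assignment of basis indices on the parties in `s` with one on the
complementary parties. -/
def combine (s : Finset ι) (x : (i : {j // j ∈ s}) → d i.1) (z : (i : {j // j ∉ s}) → d i.1)
    (i : ι) : d i :=
  if h : i ∈ s then x ⟨i, h⟩ else z ⟨i, h⟩

/-- The reduced state on the parties in `s`: partial trace over the complementary parties. -/
def pTr (ρ : Matrix (∀ i, d i) (∀ i, d i) ℂ) (s : Finset ι) :
    Matrix ((i : {j // j ∈ s}) → d i.1) ((i : {j // j ∈ s}) → d i.1) ℂ :=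
  fun x y => ∑ z : (i : {j // j ∉ s}) → d i.1, ρ (combine s x z) (combine s y z)

/-- von Neumann entropy of the reduced state on `s`. -/
def Sv (ρ : Matrix (∀ i, d i) (∀ i, d i) ℂ) (s : Finset ι) : ℝ := vnEntropy (pTr ρ s)

/-- Tsallis q-entropy of the reduced state on `s`. -/
def Sq (q : ℝ) (ρ : Matrix (∀ i, d i) (∀ i, d i) ℂ) (s : Finset ι) : ℝ :=
  tsallisEntropy q (pTr ρ s)

/-- Multipartite quantum mutual information `I(X₁:⋯:X_k) = Σ_s S(X_s) - S(X₁⋯X_k)` of a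
partition `P` (each block a finset of parties, treated as a single party). -/
def MI (ρ : Matrix (∀ i, d i) (∀ i, d i) ℂ) (P : Finset (Finset ι)) : ℝ :=
  (∑ X ∈ P, Sv ρ X) - Sv ρ (P.sup id)

/-- Dual multipartite quantum mutual information
`I'(X₁:⋯:X_k) = Σ_s S(X̄_s) - (k-1) S(X₁⋯X_k)`, where `X̄_s` is the union of all blocks
other than `X_s`. -/
def MI' (ρ : Matrix (∀ i, d i) (∀ i, d i) ℂ) (P : Finset (Finset ι)) : ℝ :=
  (∑ X ∈ P, Sv ρ (P.sup id \ X)) - ((P.card : ℝ) - 1) * Sv ρ (P.sup id)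

/-- Tsallis multipartite quantum mutual information. -/
def MIq (q : ℝ) (ρ : Matrix (∀ i, d i) (∀ i, d i) ℂ) (P : Finset (Finset ι)) : ℝ :=
  (∑ X ∈ P, Sq q ρ X) - Sq q ρ (P.sup id)

/-- Tsallis dual multipartite quantum mutual information. -/
def MIq' (q : ℝ) (ρ : Matrix (∀ i, d i) (∀ i, d i) ℂ) (P : Finset (Finset ι)) : ℝ :=
  (∑ X ∈ P, Sq q ρ (P.sup id \ X)) - ((P.card : ℝ) - 1) * Sq q ρ (P.sup id)

/-- The finest partition of the set `s` of parties: each party its own block. -/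
def finest (s : Finset ι) : Finset (Finset ι) := s.image fun i => {i}

end multi

/-- A partition (of a subsystem): nonempty pairwise disjoint blocks. -/
def IsPartition {ι : Type} [DecidableEq ι] (P : Finset (Finset ι)) : Prop :=
  (∀ X ∈ P, X.Nonempty) ∧ (P : Set (Finset ι)).PairwiseDisjoint id

/-- One coarsening step: (a) discarding whole blocks, (b) merging blocks into one block,
(c) discarding some parties from within a block containing at least two parties. -/
inductive CoarserStep {ι : Type} [DecidableEq ι] : Finset (Finset ι) → Finset (Finset ι) → Prop
  | discard {P Q : Finset (Finset ι)} (hQP : Q ⊆ P) (hQ : Q.Nonempty) : CoarserStep P Q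
  | merge (P T : Finset (Finset ι)) (hT : T ⊆ P) (hT' : T.Nonempty) :
      CoarserStep P (insert (T.sup id) (P \ T))
  | shrink (P : Finset (Finset ι)) (X X' : Finset ι) (hX : X ∈ P) (h2 : 2 ≤ X.card)
      (hsub : X' ⊆ X) (hne : X'.Nonempty) : CoarserStep P (insert X' (P.erase X))

/-- `Coarser P Q` : the partition `Q` is coarser than `P` (`P ≻ Q`). -/
def Coarser {ι : Type} [DecidableEq ι] (P Q : Finset (Finset ι)) : Prop :=
  Relation.ReflTransGen CoarserStep P Q

end

noncomputable section Stmt13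

/-- Partial trace over the second factor of a bipartite system. -/
def ptA {A B : Type} [Fintype B] (ρ : Matrix (A × B) (A × B) ℂ) : Matrix A A ℂ :=
  fun a a' => ∑ b, ρ (a, b) (a', b)

/-- Partial trace over the first factor of a bipartite system. -/
def ptB {A B : Type} [Fintype A] (ρ : Matrix (A × B) (A × B) ℂ) : Matrix B B ℂ :=
  fun b b' => ∑ a, ρ (a, b) (a, b')

/-- Tsallis 2-entropy (linear entropy) `S_2(ρ^s) = 1 - Tr((ρ^s)²)` of the reduced state. -/
def S2 {ι : Type} [Fintype ι] [DecidableEq ι] {d : ι → Type}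
    [∀ i, Fintype (d i)] [∀ i, DecidableEq (d i)]
    (ρ : Matrix (∀ i, d i) (∀ i, d i) ℂ) (s : Finset ι) : ℝ :=
  1 - (Matrix.trace (pTr ρ s * pTr ρ s)).re

/-!
Let `Q = (1 - S_A)(1 - S_B)`, where `S_A` and `S_B` swap the two `A`-factors and the two
`B`-factors of `(A ⊗ B) ⊗ (A ⊗ B)`. It is a multiple of a projection, and
`Tr (Q (ρ ⊗ ρ)) = 1 + Tr ρ² - Tr (ρ^A)² - Tr (ρ^B)²`. Hence the right-hand side is nonnegative, and
it vanishes iff `Q (ρ ⊗ ρ) = 0`. Entrywise, this says that the polarized `2 × 2` minors of the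
columns of `ρ`, read as `A × B` matrices, all vanish, so that these columns share a column factor
or a row factor; as `ρ` is Hermitian, it is then a product with a pure factor.

In the multipartite case the bipartite inequality, applied one party at a time, shows that
`I_2 = 0` forces a product state. For a product state with purities `p i`, the equation `I_2 = 0`
reads `∑ (1 - p i) = 1 - ∏ p i`, which holds for `p i ∈ [0, 1]` iff at most one `p i` differs
from `1`.
-/

open scoped Kronecker

section PosSemidef

variable {𝕜 n : Type*} [RCLike 𝕜] [Fintype n] {P M : Matrix n n 𝕜}

open scoped MatrixOrder in
theorem trace_mul_nonneg_of_posSemidef (hP : P.PosSemidef) (hM : M.PosSemidef) :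
    0 ≤ (P * M).trace := by
  classical
  obtain ⟨C, rfl⟩ := CStarAlgebra.nonneg_iff_eq_star_mul_self.mp hP.nonneg
  rw [star_eq_conjTranspose, Matrix.mul_assoc, trace_mul_comm]
  exact (hM.mul_mul_conjTranspose_same C).trace_nonneg

open scoped MatrixOrder in
theorem mul_eq_zero_of_posSemidef_of_trace_mul_eq_zero (hP : P.PosSemidef) (hM : M.PosSemidef)
    (h : (P * M).trace = 0) : P * M = 0 := by
  classical
  obtain ⟨C, rfl⟩ := CStarAlgebra.nonneg_iff_eq_star_mul_self.mp hP.nonneg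
  obtain ⟨D, rfl⟩ := CStarAlgebra.nonneg_iff_eq_star_mul_self.mp hM.nonneg
  simp only [star_eq_conjTranspose] at h ⊢
  have hCD : C * Dᴴ = 0 := by
    rw [← trace_mul_conjTranspose_self_eq_zero_iff, ← h, Matrix.mul_assoc Cᴴ,
      trace_mul_comm Cᴴ]
    simp only [conjTranspose_mul, conjTranspose_conjTranspose, Matrix.mul_assoc]
  rw [Matrix.mul_assoc, ← Matrix.mul_assoc C, hCD, Matrix.zero_mul, Matrix.mul_zero]

theorem posSemidef_of_mul_self_eq_smul {c : ℝ} (hc : 0 < c) (hP : P.IsHermitian)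
    (h : P * P = c • P) : P.PosSemidef := by
  have hPP : P = c⁻¹ • (Pᴴ * P) := by rw [hP.eq, h, inv_smul_smul₀ hc.ne']
  rw [hPP]
  exact (posSemidef_conjTranspose_mul_self P).smul (inv_nonneg.2 hc.le)

end PosSemidef

section Antisymmetrizer

variable {R 𝕜 n l : Type*} [DecidableEq n]

/-- The operator `1 - P_σ`, where `P_σ` permutes the basis vectors by `σ`. When `σ` is an
involution this is twice the orthogonal projection onto the `σ`-antisymmetric vectors; the factor
two keeps the entries integral. -/
def antisymmetrizer (R : Type*) [Ring R] (σ : Equiv.Perm n) : Matrix n n R :=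
  1 - σ.permMatrix R

theorem antisymmetrizer_mul_apply [Fintype n] [Ring R] (σ : Equiv.Perm n) (M : Matrix n l R)
    (i : n) (j : l) : (antisymmetrizer R σ * M) i j = M i j - M (σ i) j := by
  simp [antisymmetrizer, Matrix.sub_mul, PEquiv.toMatrix_toPEquiv_mul]

theorem isHermitian_antisymmetrizer [Ring R] [StarRing R] {σ : Equiv.Perm n}
    (hσ : Function.Involutive σ) : (antisymmetrizer R σ).IsHermitian := by
  have hinv : σ⁻¹ = σ := inv_eq_of_mul_eq_one_left (Equiv.ext hσ)
  rw [IsHermitian, antisymmetrizer, conjTranspose_sub, conjTranspose_one,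
    conjTranspose_permMatrix, hinv]

theorem antisymmetrizer_mul_self [Fintype n] [Ring R] {σ : Equiv.Perm n}
    (hσ : Function.Involutive σ) :
    antisymmetrizer R σ * antisymmetrizer R σ = 2 * antisymmetrizer R σ := by
  ext i j
  rw [antisymmetrizer_mul_apply, two_mul, Matrix.add_apply]
  have hflip : antisymmetrizer R σ (σ i) j = - antisymmetrizer R σ i j := by
    simp [antisymmetrizer, Matrix.one_apply, PEquiv.toMatrix_apply, hσ i, eq_comm]
  rw [hflip, sub_neg_eq_add]

theorem commute_antisymmetrizer [Fintype n] [Ring R] {σ τ : Equiv.Perm n} (h : Commute σ τ) :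
    Commute (antisymmetrizer R σ) (antisymmetrizer R τ) := by
  have hperm : Commute (σ.permMatrix R) (τ.permMatrix R) := by
    rw [Commute, SemiconjBy, ← permMatrix_mul, ← permMatrix_mul, h.eq]
  exact ((Commute.one_left _).sub_left ((Commute.one_right _).sub_right hperm))

theorem posSemidef_antisymmetrizer [Finite n] [RCLike 𝕜] {σ : Equiv.Perm n}
    (hσ : Function.Involutive σ) : (antisymmetrizer 𝕜 σ).PosSemidef := by
  have := Fintype.ofFinite n
  refine posSemidef_of_mul_self_eq_smul two_pos (isHermitian_antisymmetrizer hσ) ?_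
  rw [antisymmetrizer_mul_self hσ, two_smul, two_mul]

theorem posSemidef_antisymmetrizer_mul [Fintype n] [RCLike 𝕜] {σ τ : Equiv.Perm n}
    (hσ : Function.Involutive σ) (hτ : Function.Involutive τ) (h : Commute σ τ) :
    (antisymmetrizer 𝕜 σ * antisymmetrizer 𝕜 τ).PosSemidef := by
  have hcomm := commute_antisymmetrizer (R := 𝕜) h
  refine posSemidef_of_mul_self_eq_smul four_pos
    (((isHermitian_antisymmetrizer hσ).commute_iff (isHermitian_antisymmetrizer hτ)).1 hcomm) ?_
  rw [hcomm.symm.mul_mul_mul_comm, antisymmetrizer_mul_self hσ, antisymmetrizer_mul_self hτ,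
    two_mul, two_mul, add_mul, mul_add]
  module

end Antisymmetrizer

section VanishingMinors

variable {F K A B : Type*} [Field F]

theorem exists_eq_vecMulVec_of_minors_eq_zero {M : Matrix A B F}
    (hM : ∀ a a' b b', M a b * M a' b' = M a' b * M a b') : ∃ u v, M = vecMulVec u v := by
  by_cases hne : ∃ a b, M a b ≠ 0
  · obtain ⟨a₀, b₀, hpivot⟩ := hne
    refine ⟨fun a => M a b₀ / M a₀ b₀, M a₀, ?_⟩
    ext a b
    rw [vecMulVec_apply]
    field_simp
    linear_combination hM a a₀ b b₀
  · push Not at hne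
    exact ⟨0, 0, by ext a b; simp [hne]⟩

theorem eq_zero_or_eq_zero_of_symmetrized_mul_eq_zero (h2 : (2 : F) ≠ 0) {x : K → A → F}
    {y : K → B → F} (h : ∀ k l a b, x k a * y l b + x l a * y k b = 0) : x = 0 ∨ y = 0 := by
  by_cases hx : ∃ k a, x k a ≠ 0
  · obtain ⟨k, a, hka⟩ := hx
    have hyk (b : B) : y k b = 0 := by
      have : 2 * (x k a * y k b) = 0 := by linear_combination h k k a b
      simpa [h2, hka] using this
    right
    ext l b
    simpa [hyk, hka] using h k l a b
  · push Not at hx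
    exact .inl (funext₂ hx)

/-- A linear space of matrices of rank at most one has a common column space or a common row
space; the hypothesis is the polarization of the vanishing of all `2 × 2` minors. -/
theorem exists_common_factor_of_polarized_minors_eq_zero (h2 : (2 : F) ≠ 0) {M : K → Matrix A B F}
    (hM : ∀ k l a a' b b', M k a b * M l a' b' - M k a b' * M l a' b
      - (M k a' b * M l a b' - M k a' b' * M l a b) = 0) :
    (∃ (u : A → F) (w : K → B → F), ∀ k, M k = vecMulVec u (w k)) ∨
      ∃ (w : K → A → F) (v : B → F), ∀ k, M k = vecMulVec (w k) v := by
  by_cases hne : ∃ k a b, M k a b ≠ 0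
  swap
  · push Not at hne
    exact .inl ⟨0, 0, fun k => by ext a b; simp [hne]⟩
  obtain ⟨k₀, a₀, b₀, hpivot⟩ := hne
  set c := M k₀ a₀ b₀
  have hM₀ (a b) : c * M k₀ a b = M k₀ a b₀ * M k₀ a₀ b := by
    apply mul_left_cancel₀ h2
    linear_combination hM k₀ k₀ a a₀ b b₀
  have hcross (k a b) : c * (c * M k a b) = c * M k₀ a₀ b * M k a b₀
      + c * M k₀ a b₀ * M k a₀ b - M k₀ a b₀ * M k₀ a₀ b * M k a₀ b₀ := by
    linear_combination c * hM k₀ k a a₀ b b₀ - M k a₀ b₀ * hM₀ a b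
  let colResidual (k : K) (a : A) : F := c * M k a b₀ - M k₀ a b₀ * M k a₀ b₀
  let rowResidual (k : K) (b : B) : F := c * M k a₀ b - M k₀ a₀ b * M k a₀ b₀
  have hresidual (k l a b) :
      colResidual k a * rowResidual l b + colResidual l a * rowResidual k b = 0 := by
    simp only [colResidual, rowResidual]
    linear_combination (-c * c) * hM k l a a₀ b b₀ + M l a₀ b₀ * hcross k a b
      + M k a₀ b₀ * hcross l a b
  rcases eq_zero_or_eq_zero_of_symmetrized_mul_eq_zero h2 hresidual with hcol | hrow
  · refine .inl ⟨fun a => M k₀ a b₀ / c, fun k => M k a₀, fun k => ?_⟩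
    ext a b
    have hka : colResidual k a = 0 := congrFun₂ hcol k a
    rw [vecMulVec_apply, div_mul_eq_mul_div, eq_div_iff hpivot]
    apply mul_left_cancel₀ hpivot
    linear_combination hcross k a b + M k₀ a₀ b * hka
  · refine .inr ⟨fun k a => M k a b₀, fun b => M k₀ a₀ b / c, fun k => ?_⟩
    ext a b
    have hkb : rowResidual k b = 0 := congrFun₂ hrow k b
    rw [vecMulVec_apply, mul_div_assoc', eq_div_iff hpivot]
    apply mul_left_cancel₀ hpivot
    linear_combination hcross k a b + M k₀ a b₀ * hkb

end VanishingMinors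

section Rank

variable {F n : Type*} [Field F] [Fintype n] {σ : Matrix n n F}

theorem one_le_rank_of_trace_eq_one (h : σ.trace = 1) : 1 ≤ σ.rank := by
  classical
  by_contra! hlt
  have hσ : σ = 0 := by
    rwa [Nat.lt_one_iff, Matrix.rank, Submodule.finrank_eq_zero, LinearMap.range_eq_bot,
      ← toLin'_apply', LinearEquiv.map_eq_zero_iff] at hlt
  simp [hσ] at h

theorem exists_eq_vecMulVec_of_rank_le_one {m : Type*} {M : Matrix m n F} (h : M.rank ≤ 1) :
    ∃ u v, M = vecMulVec u v := by
  classical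
  rw [Matrix.rank, finrank_le_one_iff] at h
  obtain ⟨u, hu⟩ := h
  choose v hv using fun j => hu ⟨M.mulVecLin (Pi.single j 1), LinearMap.mem_range_self _ _⟩
  refine ⟨u, v, ?_⟩
  ext i j
  have := congrFun (congrArg Subtype.val (hv j)) i
  simpa [vecMulVec_apply, mul_comm] using this.symm

theorem trace_mul_self_of_rank_le_one (h : σ.rank ≤ 1) : (σ * σ).trace = σ.trace ^ 2 := by
  obtain ⟨u, v, rfl⟩ := exists_eq_vecMulVec_of_rank_le_one h
  simp [vecMulVec_mul_vecMulVec, trace_vecMulVec, sq, dotProduct_comm]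

end Rank

theorem trace_submatrix_equiv {R m n : Type*} [AddCommMonoid R] [Fintype m] [Fintype n]
    (e : m ≃ n) (M : Matrix n n R) : (M.submatrix e e).trace = M.trace :=
  e.sum_comp fun i => M i i

theorem trace_antisymmetrizer_prodComm_mul_kronecker {R n : Type*} [CommRing R] [Fintype n]
    [DecidableEq n] (σ : Matrix n n R) :
    (antisymmetrizer R (Equiv.prodComm n n) * (σ ⊗ₖ σ)).trace = σ.trace ^ 2 - (σ * σ).trace := by
  simp only [Matrix.trace, diag_apply, antisymmetrizer_mul_apply, Fintype.sum_prod_type,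
    kronecker_apply, Equiv.prodComm_apply, Prod.swap, Finset.sum_sub_distrib, sq,
    Finset.sum_mul_sum]
  simp only [Matrix.mul_apply, mul_comm]

section Purity

variable {m n : Type} [Fintype m] [Fintype n] {σ : Matrix n n ℂ}

/-- The purity `Tr σ²`. Only the real part of the trace is kept, since `Tr σ²` is real for the
Hermitian `σ` of interest. -/
def purity (σ : Matrix n n ℂ) : ℝ := (σ * σ).trace.re

theorem ofReal_purity (hσ : σ.IsHermitian) : (purity σ : ℂ) = (σ * σ).trace := by
  refine Complex.conj_eq_iff_re.1 ?_
  rw [starRingEnd_apply, ← trace_conjTranspose, conjTranspose_mul, hσ.eq]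

theorem purity_nonneg (hσ : σ.IsHermitian) : 0 ≤ purity σ := by
  have h := (posSemidef_conjTranspose_mul_self σ).trace_nonneg
  rw [hσ.eq] at h
  exact (Complex.le_def.1 h).1

theorem purity_kronecker {τ : Matrix m m ℂ} (hσ : σ.IsHermitian) (hτ : τ.IsHermitian) :
    purity (σ ⊗ₖ τ) = purity σ * purity τ := by
  rw [purity, ← mul_kronecker_mul, trace_kronecker, ← ofReal_purity hσ, ← ofReal_purity hτ,
    ← Complex.ofReal_mul, Complex.ofReal_re]

theorem purity_submatrix_equiv (e : m ≃ n) (σ : Matrix n n ℂ) :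
    purity (σ.submatrix e e) = purity σ := by
  rw [purity, submatrix_mul_equiv, trace_submatrix_equiv, purity]

end Purity

section Density

variable {m n : Type} [Fintype m] [Fintype n] [DecidableEq m] [DecidableEq n] {σ : Matrix n n ℂ}

theorem IsDensity.submatrix_equiv (hσ : IsDensity σ) (e : m ≃ n) : IsDensity (σ.submatrix e e) :=
  ⟨hσ.1.submatrix e, (trace_submatrix_equiv e σ).trans hσ.2⟩

theorem IsDensity.trace_antisymmetrizer_prodComm_mul_kronecker_eq_ofReal (hσ : IsDensity σ) :
    (antisymmetrizer ℂ (Equiv.prodComm n n) * (σ ⊗ₖ σ)).trace = ((1 - purity σ : ℝ) : ℂ) := by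
  rw [trace_antisymmetrizer_prodComm_mul_kronecker, hσ.2,
    ← ofReal_purity hσ.1.isHermitian]
  push_cast
  ring

theorem IsDensity.purity_le_one (hσ : IsDensity σ) : purity σ ≤ 1 := by
  have h := trace_mul_nonneg_of_posSemidef
    (posSemidef_antisymmetrizer (𝕜 := ℂ) (σ := Equiv.prodComm n n) Prod.swap_swap)
    (hσ.1.kronecker hσ.1)
  rw [hσ.trace_antisymmetrizer_prodComm_mul_kronecker_eq_ofReal, Complex.zero_le_real] at h
  linarith

theorem IsDensity.purity_eq_one_of_rank_le_one (hσ : IsDensity σ) (h : σ.rank ≤ 1) :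
    purity σ = 1 := by
  rw [purity, trace_mul_self_of_rank_le_one h, hσ.2, one_pow, Complex.one_re]

theorem IsDensity.rank_le_one_of_purity_eq_one (hσ : IsDensity σ) (h : purity σ = 1) :
    σ.rank ≤ 1 := by
  have hzero : antisymmetrizer ℂ (Equiv.prodComm n n) * (σ ⊗ₖ σ) = 0 :=
    mul_eq_zero_of_posSemidef_of_trace_mul_eq_zero (posSemidef_antisymmetrizer Prod.swap_swap)
      (hσ.1.kronecker hσ.1) (by simp [hσ.trace_antisymmetrizer_prodComm_mul_kronecker_eq_ofReal, h])
  have hminors (i i' j j' : n) : σ i j * σ i' j' = σ i' j * σ i j' := by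
    have hentry := congrFun₂ hzero (i, i') (j, j')
    rw [antisymmetrizer_mul_apply] at hentry
    exact sub_eq_zero.1 hentry
  obtain ⟨u, v, rfl⟩ := exists_eq_vecMulVec_of_minors_eq_zero hminors
  exact rank_vecMulVec_le u v

theorem IsDensity.one_lt_rank_iff_purity_ne_one (hσ : IsDensity σ) :
    1 < σ.rank ↔ purity σ ≠ 1 := by
  rw [← not_le, not_iff_not]
  exact ⟨hσ.purity_eq_one_of_rank_le_one, hσ.rank_le_one_of_purity_eq_one⟩

theorem IsDensity.apply_of_subsingleton [Subsingleton n] (hσ : IsDensity σ) (i j : n) :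
    σ i j = 1 := by
  have := uniqueOfSubsingleton i
  rw [← hσ.2, Matrix.trace, Fintype.sum_unique, diag_apply, Subsingleton.elim i default,
    Subsingleton.elim j default]

theorem IsDensity.purity_of_subsingleton [Subsingleton n] (hσ : IsDensity σ) : purity σ = 1 := by
  obtain ⟨i, -, -⟩ := Finset.exists_ne_zero_of_sum_ne_zero (hσ.2.trans_ne one_ne_zero)
  have := uniqueOfSubsingleton i
  simp [purity, Matrix.trace, Matrix.mul_apply, hσ.apply_of_subsingleton]

end Density

section Bipartite

variable {A B : Type} {ρ : Matrix (A × B) (A × B) ℂ}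

theorem ptA_kronecker [Fintype B] (σ : Matrix A A ℂ) (τ : Matrix B B ℂ) :
    ptA (σ ⊗ₖ τ) = τ.trace • σ := by
  ext a a'
  simp [ptA, Matrix.trace, ← Finset.mul_sum, mul_comm]

theorem ptB_kronecker [Fintype A] (σ : Matrix A A ℂ) (τ : Matrix B B ℂ) :
    ptB (σ ⊗ₖ τ) = σ.trace • τ := by
  ext b b'
  simp [ptB, Matrix.trace, ← Finset.sum_mul]

theorem kronecker_eq_ptA_kronecker_ptB [Fintype A] [Fintype B] {σ : Matrix A A ℂ}
    {τ : Matrix B B ℂ} (h : (σ ⊗ₖ τ).trace = 1) :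
    σ ⊗ₖ τ = ptA (σ ⊗ₖ τ) ⊗ₖ ptB (σ ⊗ₖ τ) := by
  rw [trace_kronecker, mul_comm] at h
  rw [ptA_kronecker, ptB_kronecker, smul_kronecker, kronecker_smul, smul_smul, h, one_smul]

variable (A B) in
/-- The swap of the two `A`-factors on the basis of `(A ⊗ B) ⊗ (A ⊗ B)`. -/
def swapFst : Equiv.Perm ((A × B) × (A × B)) :=
  Function.Involutive.toPerm (fun p => ((p.2.1, p.1.2), (p.1.1, p.2.2))) fun _ => rfl

variable (A B) in
/-- The swap of the two `B`-factors on the basis of `(A ⊗ B) ⊗ (A ⊗ B)`. -/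
def swapSnd : Equiv.Perm ((A × B) × (A × B)) :=
  Function.Involutive.toPerm (fun p => ((p.1.1, p.2.2), (p.2.1, p.1.2))) fun _ => rfl

variable (A B) in
/-- Four times the orthogonal projection onto the vectors of `(A ⊗ B) ⊗ (A ⊗ B)` that are
antisymmetric both under the swap of the `A`-factors and under the swap of the `B`-factors. -/
def biAntisymmetrizer [Fintype A] [Fintype B] [DecidableEq A] [DecidableEq B] :
    Matrix ((A × B) × (A × B)) ((A × B) × (A × B)) ℂ :=
  antisymmetrizer ℂ (swapFst A B) * antisymmetrizer ℂ (swapSnd A B)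

theorem exists_eq_kronecker_of_apply_eq_mul {F : Type*} [Field F] [StarRing F]
    {ρ : Matrix (A × B) (A × B) F} (hρ : ρ.IsHermitian) {u : A → F} {w : A × B → B → F}
    (h : ∀ a b p, ρ (a, b) p = u a * w p b) :
    ∃ τ : Matrix B B F, ρ = vecMulVec u (star u) ⊗ₖ τ := by
  by_cases hu : ∃ a₀, u a₀ ≠ 0
  · obtain ⟨a₀, ha₀⟩ := hu
    refine ⟨of fun b b' => star (w (a₀, b) b') / u a₀, ?_⟩
    ext ⟨a, b⟩ ⟨a', b'⟩
    have hw : u a₀ * w (a', b') b = star (u a') * star (w (a₀, b) b') := by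
      rw [← h, ← star_mul', ← h, hρ.apply]
    simp only [h, kronecker_apply, vecMulVec_apply, Pi.star_apply, of_apply]
    field_simp
    linear_combination u a * hw
  · push Not at hu
    exact ⟨0, by ext ⟨a, b⟩ p; simp [h, hu]⟩

variable [Fintype A] [Fintype B]

theorem eq_kronecker_and_rank_ptA_le_one_of_apply_eq_mul (hρ : ρ.IsHermitian) (ht : ρ.trace = 1)
    {u : A → ℂ} {w : A × B → B → ℂ} (h : ∀ a b p, ρ (a, b) p = u a * w p b) :
    ρ = ptA ρ ⊗ₖ ptB ρ ∧ (ptA ρ).rank ≤ 1 := by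
  obtain ⟨τ, rfl⟩ := exists_eq_kronecker_of_apply_eq_mul hρ h
  refine ⟨kronecker_eq_ptA_kronecker_ptB ht, ?_⟩
  rw [ptA_kronecker, ← smul_vecMulVec]
  exact rank_vecMulVec_le _ _

theorem trace_ptA (ρ : Matrix (A × B) (A × B) ℂ) : (ptA ρ).trace = ρ.trace :=
  (Fintype.sum_prod_type fun p => ρ p p).symm

variable [DecidableEq A] [DecidableEq B]

theorem IsDensity.swap (hρ : IsDensity ρ) : IsDensity (ρ.submatrix Prod.swap Prod.swap) :=
  hρ.submatrix_equiv (Equiv.prodComm B A)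

theorem isDensity_ptA (hρ : IsDensity ρ) : IsDensity (ptA ρ) := by
  refine ⟨?_, (trace_ptA ρ).trans hρ.2⟩
  have hsum : ptA ρ = ∑ b, ρ.submatrix (·, b) (·, b) := by
    ext a a'
    simp [ptA, Matrix.sum_apply]
  rw [hsum]
  exact posSemidef_sum _ fun b _ => hρ.1.submatrix _

theorem isDensity_ptB (hρ : IsDensity ρ) : IsDensity (ptB ρ) :=
  isDensity_ptA hρ.swap

theorem posSemidef_biAntisymmetrizer : (biAntisymmetrizer A B).PosSemidef :=
  posSemidef_antisymmetrizer_mul (Function.Involutive.toPerm_involutive _)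
    (Function.Involutive.toPerm_involutive _) (Equiv.ext fun _ => rfl)

theorem biAntisymmetrizer_mul_apply {l : Type*} (M : Matrix ((A × B) × (A × B)) l ℂ)
    (a a' : A) (b b' : B) (j : l) :
    (biAntisymmetrizer A B * M) ((a, b), (a', b')) j =
      M ((a, b), (a', b')) j - M ((a, b'), (a', b)) j
        - (M ((a', b), (a, b')) j - M ((a', b'), (a, b)) j) := by
  simp only [biAntisymmetrizer, Matrix.mul_assoc, antisymmetrizer_mul_apply]
  rfl

theorem trace_biAntisymmetrizer_mul_kronecker (ρ : Matrix (A × B) (A × B) ℂ) :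
    (biAntisymmetrizer A B * (ρ ⊗ₖ ρ)).trace = ρ.trace ^ 2 - (ptB ρ * ptB ρ).trace
      - ((ptA ρ * ptA ρ).trace - (ρ * ρ).trace) := by
  have hρB : (ptB ρ * ptB ρ).trace =
      ∑ a, ∑ b, ∑ a', ∑ b', ρ (a, b') (a, b) * ρ (a', b) (a', b') := by
    simp only [Matrix.trace, diag_apply, Matrix.mul_apply, ptB, Finset.sum_mul_sum]
    rw [Finset.sum_comm, Finset.sum_congr rfl fun _ _ => Finset.sum_comm, Finset.sum_comm]
    exact Finset.sum_congr rfl fun _ _ => Finset.sum_congr rfl fun _ _ => Finset.sum_comm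
  have hρA : (ptA ρ * ptA ρ).trace =
      ∑ a, ∑ b, ∑ a', ∑ b', ρ (a', b) (a, b) * ρ (a, b') (a', b') := by
    simp only [Matrix.trace, diag_apply, Matrix.mul_apply, ptA, Finset.sum_mul_sum]
    rw [Finset.sum_comm]
    exact Finset.sum_congr rfl fun _ _ => Finset.sum_comm
  have hρ : (ρ * ρ).trace = ∑ a, ∑ b, ∑ a', ∑ b', ρ (a', b') (a, b) * ρ (a, b) (a', b') := by
    simp only [Matrix.trace, diag_apply, Matrix.mul_apply, Fintype.sum_prod_type, mul_comm]
  have hsq : ρ.trace ^ 2 = ∑ a, ∑ b, ∑ a', ∑ b', ρ (a, b) (a, b) * ρ (a', b') (a', b') := by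
    rw [sq, Matrix.trace, Finset.sum_mul_sum]
    simp only [diag_apply, Fintype.sum_prod_type]
  rw [hρA, hρB, hρ, hsq]
  simp only [Matrix.trace, diag_apply, Fintype.sum_prod_type, biAntisymmetrizer_mul_apply,
    kronecker_apply, Finset.sum_sub_distrib]

theorem IsDensity.trace_biAntisymmetrizer_mul_kronecker_eq_ofReal (hρ : IsDensity ρ) :
    (biAntisymmetrizer A B * (ρ ⊗ₖ ρ)).trace =
      ((1 + purity ρ - (purity (ptA ρ) + purity (ptB ρ)) : ℝ) : ℂ) := by
  rw [trace_biAntisymmetrizer_mul_kronecker, hρ.2, ← ofReal_purity hρ.1.isHermitian,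
    ← ofReal_purity (isDensity_ptA hρ).1.isHermitian,
    ← ofReal_purity (isDensity_ptB hρ).1.isHermitian]
  push_cast
  ring

theorem IsDensity.purity_ptA_add_purity_ptB_le (hρ : IsDensity ρ) :
    purity (ptA ρ) + purity (ptB ρ) ≤ 1 + purity ρ := by
  have h := trace_mul_nonneg_of_posSemidef posSemidef_biAntisymmetrizer (hρ.1.kronecker hρ.1)
  rwa [hρ.trace_biAntisymmetrizer_mul_kronecker_eq_ofReal, Complex.zero_le_real, sub_nonneg] at h

theorem IsDensity.biAntisymmetrizer_mul_kronecker_eq_zero (hρ : IsDensity ρ)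
    (h : 1 + purity ρ = purity (ptA ρ) + purity (ptB ρ)) :
    biAntisymmetrizer A B * (ρ ⊗ₖ ρ) = 0 :=
  mul_eq_zero_of_posSemidef_of_trace_mul_eq_zero posSemidef_biAntisymmetrizer
    (hρ.1.kronecker hρ.1) (by simp [hρ.trace_biAntisymmetrizer_mul_kronecker_eq_ofReal, h])

theorem eq_kronecker_and_rank_le_one_of_biAntisymmetrizer_mul_eq_zero (hρ : IsDensity ρ)
    (h : biAntisymmetrizer A B * (ρ ⊗ₖ ρ) = 0) :
    ρ = ptA ρ ⊗ₖ ptB ρ ∧ ((ptA ρ).rank ≤ 1 ∨ (ptB ρ).rank ≤ 1) := by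
  let column (p : A × B) : Matrix A B ℂ := of fun a b => ρ (a, b) p
  have hminors (p q : A × B) (a a' : A) (b b' : B) :
      column p a b * column q a' b' - column p a b' * column q a' b
        - (column p a' b * column q a b' - column p a' b' * column q a b) = 0 := by
    have hentry := congrFun₂ h ((a, b), (a', b')) (p, q)
    rwa [biAntisymmetrizer_mul_apply] at hentry
  rcases exists_common_factor_of_polarized_minors_eq_zero two_ne_zero hminors with
    ⟨u, w, huw⟩ | ⟨w, v, hwv⟩
  · obtain ⟨hprod, hrank⟩ := eq_kronecker_and_rank_ptA_le_one_of_apply_eq_mul hρ.1.isHermitian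
      hρ.2 (u := u) (w := w) fun a b p => congrFun₂ (huw p) a b
    exact ⟨hprod, .inl hrank⟩
  · obtain ⟨hprod, hrank⟩ := eq_kronecker_and_rank_ptA_le_one_of_apply_eq_mul
      hρ.swap.1.isHermitian hρ.swap.2 (u := v) (w := fun p => w p.swap) fun b a p =>
        (congrFun₂ (hwv p.swap) a b).trans (mul_comm _ _)
    refine ⟨?_, .inr hrank⟩
    ext p q
    exact (congrFun₂ hprod p.swap q.swap).trans (mul_comm _ _)

theorem IsDensity.one_add_purity_eq_iff (hρ : IsDensity ρ) :
    1 + purity ρ = purity (ptA ρ) + purity (ptB ρ) ↔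
      ρ = ptA ρ ⊗ₖ ptB ρ ∧ min (ptA ρ).rank (ptB ρ).rank = 1 := by
  have hmin : min (ptA ρ).rank (ptB ρ).rank = 1 ↔
      (ptA ρ).rank ≤ 1 ∨ (ptB ρ).rank ≤ 1 := by
    rw [← min_le_iff]
    exact ⟨le_of_eq, fun h => h.antisymm <|
      le_min (one_le_rank_of_trace_eq_one (isDensity_ptA hρ).2)
        (one_le_rank_of_trace_eq_one (isDensity_ptB hρ).2)⟩
  rw [hmin]
  constructor
  · exact fun h => eq_kronecker_and_rank_le_one_of_biAntisymmetrizer_mul_eq_zero hρ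
      (hρ.biAntisymmetrizer_mul_kronecker_eq_zero h)
  · rintro ⟨hprod, hrank⟩
    have hpurity : purity ρ = purity (ptA ρ) * purity (ptB ρ) := by
      rw [← purity_kronecker (isDensity_ptA hρ).1.isHermitian (isDensity_ptB hρ).1.isHermitian,
        ← hprod]
    rw [hpurity]
    rcases hrank with hA | hB
    · rw [(isDensity_ptA hρ).purity_eq_one_of_rank_le_one hA, one_mul]
    · rw [(isDensity_ptB hρ).purity_eq_one_of_rank_le_one hB, mul_one, add_comm]

end Bipartite

section UnitInterval

variable {R ι : Type*} [CommRing R] [LinearOrder R] [IsStrictOrderedRing R] {s : Finset ι}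
  {p : ι → R}

theorem one_sub_prod_le_sum_one_sub (h0 : ∀ i ∈ s, 0 ≤ p i) (h1 : ∀ i ∈ s, p i ≤ 1) :
    1 - ∏ i ∈ s, p i ≤ ∑ i ∈ s, (1 - p i) := by
  classical
  induction s using Finset.induction_on with
  | empty => simp
  | insert i s hi ih =>
    rw [Finset.forall_mem_insert] at h0 h1
    have hle : ∏ j ∈ s, p j ≤ 1 := Finset.prod_le_one h0.2 h1.2
    rw [Finset.prod_insert hi, Finset.sum_insert hi]
    nlinarith [ih h0.2 h1.2, mul_nonneg (sub_nonneg.2 h1.1) (sub_nonneg.2 hle)]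

theorem one_sub_prod_add_mul_le_sum_one_sub (h0 : ∀ i ∈ s, 0 ≤ p i) (h1 : ∀ i ∈ s, p i ≤ 1)
    {i j : ι} (hi : i ∈ s) (hj : j ∈ s) (hij : i ≠ j) :
    1 - ∏ k ∈ s, p k + (1 - p i) * (1 - p j) ≤ ∑ k ∈ s, (1 - p k) := by
  classical
  have hj' : j ∈ s.erase i := Finset.mem_erase.2 ⟨hij.symm, hj⟩
  set r := (s.erase i).erase j
  have hr : r ⊆ s := (Finset.erase_subset _ _).trans (Finset.erase_subset _ _)
  have hrest : 1 - ∏ k ∈ r, p k ≤ ∑ k ∈ r, (1 - p k) :=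
    one_sub_prod_le_sum_one_sub (fun k hk => h0 k (hr hk)) fun k hk => h1 k (hr hk)
  have hprod : ∏ k ∈ r, p k ≤ 1 :=
    Finset.prod_le_one (fun k hk => h0 k (hr hk)) fun k hk => h1 k (hr hk)
  have hpair : p i * p j ≤ 1 := mul_le_one₀ (h1 i hi) (h0 j hj) (h1 j hj)
  rw [← Finset.mul_prod_erase s p hi, ← Finset.mul_prod_erase _ p hj',
    ← Finset.add_sum_erase s _ hi, ← Finset.add_sum_erase _ _ hj']
  nlinarith [mul_nonneg (sub_nonneg.2 hpair) (sub_nonneg.2 hprod)]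

theorem sum_one_sub_eq_one_sub_prod_iff [Fintype ι] (h0 : ∀ i, 0 ≤ p i) (h1 : ∀ i, p i ≤ 1) :
    ∑ i, (1 - p i) = 1 - ∏ i, p i ↔ {i | p i ≠ 1}.Subsingleton := by
  constructor
  · intro h i hi j hj
    by_contra hij
    have hgap := one_sub_prod_add_mul_le_sum_one_sub (s := Finset.univ) (fun k _ => h0 k)
      (fun k _ => h1 k) (Finset.mem_univ i) (Finset.mem_univ j) hij
    have hpos : 0 < (1 - p i) * (1 - p j) :=
      mul_pos (sub_pos.2 ((h1 i).lt_of_ne hi)) (sub_pos.2 ((h1 j).lt_of_ne hj))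
    linarith
  · intro hsub
    rcases Set.eq_empty_or_nonempty {i | p i ≠ 1} with hempty | ⟨i, hi⟩
    · have hone (i : ι) : p i = 1 := not_not.1 (Set.eq_empty_iff_forall_notMem.1 hempty i)
      simp [hone]
    · have hone (j : ι) (hj : j ≠ i) : p j = 1 := by
        by_contra hne
        exact hj (hsub hne hi)
      rw [Fintype.prod_eq_single i hone, Fintype.sum_eq_single i fun j hj => by simp [hone j hj]]

end UnitInterval

section PiGlue

variable {ι : Type*} {d : ι → Type*} {p q r : ι → Prop} [DecidablePred p]

/-- Families indexed by `p` and by `q` glue to a family indexed by the disjoint union `r` of `p`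
and `q`. Predicates rather than finsets are used so that `r` may be the complement of a finset. -/
def piGlue (hr : ∀ i, r i ↔ p i ∨ q i) (hpq : ∀ i, p i → ¬ q i) :
    ((i : {j // p j}) → d i) × ((i : {j // q j}) → d i) ≃ ((i : {j // r j}) → d i) where
  toFun x i := if h : p i then x.1 ⟨i, h⟩ else x.2 ⟨i, ((hr i).1 i.2).resolve_left h⟩
  invFun x := (fun i => x ⟨i, (hr i).2 (.inl i.2)⟩, fun i => x ⟨i, (hr i).2 (.inr i.2)⟩)
  left_inv x := by
    ext i
    · exact dif_pos i.2
    · exact dif_neg fun h => hpq i h i.2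
  right_inv x := by
    ext i
    by_cases h : p i <;> simp [h]

/-- `piGlue` for two disjoint finsets and their union. -/
def piUnion [DecidableEq ι] {s t : Finset ι} (hst : Disjoint s t) :
    ((i : {j // j ∈ s}) → d i) × ((i : {j // j ∈ t}) → d i) ≃ ((i : {j // j ∈ s ∪ t}) → d i) :=
  piGlue (fun _ => Finset.mem_union) fun _ hs => Finset.disjoint_left.1 hst hs

theorem piUnion_restrict [DecidableEq ι] {s t : Finset ι} (hst : Disjoint s t) (x : ∀ i, d i) :
    piUnion hst (s.restrict x, t.restrict x) = (s ∪ t).restrict x :=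
  (piUnion hst).eq_symm_apply.1 rfl

end PiGlue

section ProductForm

variable {R ι : Type*} [CommSemiring R] [Fintype ι] [DecidableEq ι] {d : ι → Type*}
  [∀ i, Fintype (d i)] {M N : Matrix (∀ i, d i) (∀ i, d i) R} {σ τ : ∀ i, Matrix (d i) (d i) R}

theorem trace_mul_of_apply_eq_prod (hM : ∀ x y, M x y = ∏ i, σ i (x i) (y i))
    (hN : ∀ x y, N x y = ∏ i, τ i (x i) (y i)) : (M * N).trace = ∏ i, (σ i * τ i).trace := by
  simp only [Matrix.trace, diag_apply, Matrix.mul_apply, hM, hN, ← Finset.prod_mul_distrib]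
  simp only [Finset.prod_univ_sum, Fintype.piFinset_univ]

end ProductForm

section Combine

variable {ι : Type} [DecidableEq ι] {d : ι → Type} {s t : Finset ι}

theorem notMem_left_iff_of_disjoint (hst : Disjoint s t) (i : ι) : i ∉ s ↔ i ∈ t ∨ i ∉ s ∪ t := by
  have hts : i ∈ t → i ∉ s := fun hi => Finset.disjoint_right.1 hst hi
  rw [Finset.mem_union]
  tauto

theorem notMem_right_iff_of_disjoint (hst : Disjoint s t) (i : ι) :
    i ∉ t ↔ i ∈ s ∨ i ∉ s ∪ t := by
  rw [Finset.union_comm]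
  exact notMem_left_iff_of_disjoint hst.symm i

theorem combine_piUnion_left (hst : Disjoint s t) (x : (i : {j // j ∈ s}) → d i)
    (y : (i : {j // j ∈ t}) → d i) (z : (i : {j // j ∉ s ∪ t}) → d i) :
    combine (s ∪ t) (piUnion hst (x, y)) z = combine s x (piGlue (notMem_left_iff_of_disjoint hst)
      (fun _ hi => not_not.2 (Finset.mem_union_right s hi)) (y, z)) := by
  ext i
  by_cases hs : i ∈ s <;> by_cases ht : i ∈ t <;> simp [combine, piUnion, piGlue, hs, ht]

theorem combine_piUnion_right (hst : Disjoint s t) (x : (i : {j // j ∈ s}) → d i)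
    (y : (i : {j // j ∈ t}) → d i) (z : (i : {j // j ∉ s ∪ t}) → d i) :
    combine (s ∪ t) (piUnion hst (x, y)) z = combine t y (piGlue (notMem_right_iff_of_disjoint hst)
      (fun _ hi => not_not.2 (Finset.mem_union_left t hi)) (x, z)) := by
  ext i
  by_cases hs : i ∈ s
  · have ht : i ∉ t := Finset.disjoint_left.1 hst hs
    simp [combine, piUnion, piGlue, hs, ht]
  · by_cases ht : i ∈ t <;> simp [combine, piUnion, piGlue, hs, ht]

end Combine

section PartialTrace

variable {ι : Type} [Fintype ι] [DecidableEq ι] {d : ι → Type} [∀ i, Fintype (d i)]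
  {s t : Finset ι}

theorem trace_pTr (ρ : Matrix (∀ i, d i) (∀ i, d i) ℂ) (s : Finset ι) :
    (pTr ρ s).trace = ρ.trace := by
  rw [Matrix.trace, Matrix.trace,
    ← (Equiv.piEquivPiSubtypeProd (· ∈ s) d).symm.sum_comp, Fintype.sum_prod_type]
  rfl

theorem pTr_univ_apply (ρ : Matrix (∀ i, d i) (∀ i, d i) ℂ) (x y : ∀ i, d i) :
    pTr ρ Finset.univ (Finset.univ.restrict x) (Finset.univ.restrict y) = ρ x y := by
  have : IsEmpty {j : ι // j ∉ Finset.univ} := ⟨fun j => j.2 (Finset.mem_univ _)⟩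
  rw [pTr, Fintype.sum_unique]
  congr <;> simp [combine, funext_iff]

theorem purity_pTr_univ (ρ : Matrix (∀ i, d i) (∀ i, d i) ℂ) :
    purity (pTr ρ Finset.univ) = purity ρ := by
  let e : (∀ i, d i) ≃ ((i : {j // j ∈ Finset.univ}) → d i) :=
    { toFun := Finset.univ.restrict
      invFun := fun x i => x ⟨i, Finset.mem_univ i⟩
      left_inv := fun _ => rfl
      right_inv := fun _ => rfl }
  rw [← purity_submatrix_equiv e]
  exact congrArg purity (Matrix.ext (pTr_univ_apply ρ))

/-- The reduced state on `s ∪ t`, viewed as a state of the bipartite system with parties `s`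
and `t`. -/
def bipartiteReduction (ρ : Matrix (∀ i, d i) (∀ i, d i) ℂ) (hst : Disjoint s t) :
    Matrix (((i : {j // j ∈ s}) → d i) × ((i : {j // j ∈ t}) → d i))
      (((i : {j // j ∈ s}) → d i) × ((i : {j // j ∈ t}) → d i)) ℂ :=
  (pTr ρ (s ∪ t)).submatrix (piUnion hst) (piUnion hst)

theorem ptA_bipartiteReduction (ρ : Matrix (∀ i, d i) (∀ i, d i) ℂ) (hst : Disjoint s t) :
    ptA (bipartiteReduction ρ hst) = pTr ρ s := by
  ext x x'
  simp only [ptA, bipartiteReduction, submatrix_apply, pTr, combine_piUnion_left]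
  rw [← Equiv.sum_comp (piGlue (notMem_left_iff_of_disjoint hst) _), Fintype.sum_prod_type]

theorem ptB_bipartiteReduction (ρ : Matrix (∀ i, d i) (∀ i, d i) ℂ) (hst : Disjoint s t) :
    ptB (bipartiteReduction ρ hst) = pTr ρ t := by
  ext y y'
  simp only [ptB, bipartiteReduction, submatrix_apply, pTr, combine_piUnion_right]
  rw [← Equiv.sum_comp (piGlue (notMem_right_iff_of_disjoint hst) _), Fintype.sum_prod_type]

theorem purity_bipartiteReduction (ρ : Matrix (∀ i, d i) (∀ i, d i) ℂ) (hst : Disjoint s t) :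
    purity (bipartiteReduction ρ hst) = purity (pTr ρ (s ∪ t)) :=
  purity_submatrix_equiv _ _

end PartialTrace

section Multipartite

variable {ι : Type} [Fintype ι] [DecidableEq ι] {d : ι → Type}
  [∀ i, Fintype (d i)] [∀ i, DecidableEq (d i)] {ρ : Matrix (∀ i, d i) (∀ i, d i) ℂ}
  {s t : Finset ι}

theorem S2_eq_one_sub_purity (ρ : Matrix (∀ i, d i) (∀ i, d i) ℂ) (s : Finset ι) :
    S2 ρ s = 1 - purity (pTr ρ s) :=
  rfl

theorem isDensity_pTr (hρ : IsDensity ρ) (s : Finset ι) : IsDensity (pTr ρ s) := by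
  refine ⟨?_, (trace_pTr ρ s).trans hρ.2⟩
  have hsum : pTr ρ s = ∑ z, ρ.submatrix (combine s · z) (combine s · z) := by
    ext x y
    simp [pTr, Matrix.sum_apply]
  rw [hsum]
  exact posSemidef_sum _ fun z _ => hρ.1.submatrix _

theorem isDensity_bipartiteReduction (hρ : IsDensity ρ) (hst : Disjoint s t) :
    IsDensity (bipartiteReduction ρ hst) :=
  (isDensity_pTr hρ (s ∪ t)).submatrix_equiv (piUnion hst)

theorem S2_empty (hρ : IsDensity ρ) : S2 ρ ∅ = 0 := by
  rw [S2_eq_one_sub_purity, (isDensity_pTr hρ ∅).purity_of_subsingleton, sub_self]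

theorem S2_union_le (hρ : IsDensity ρ) (hst : Disjoint s t) : S2 ρ (s ∪ t) ≤ S2 ρ s + S2 ρ t := by
  have h := (isDensity_bipartiteReduction hρ hst).purity_ptA_add_purity_ptB_le
  rw [ptA_bipartiteReduction, ptB_bipartiteReduction, purity_bipartiteReduction] at h
  simp only [S2_eq_one_sub_purity]
  linarith

theorem pTr_union_apply_of_S2_union_eq (hρ : IsDensity ρ) (hst : Disjoint s t)
    (h : S2 ρ (s ∪ t) = S2 ρ s + S2 ρ t) (x y : ∀ i, d i) :
    pTr ρ (s ∪ t) ((s ∪ t).restrict x) ((s ∪ t).restrict y) =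
      pTr ρ s (s.restrict x) (s.restrict y) * pTr ρ t (t.restrict x) (t.restrict y) := by
  have hprod := ((isDensity_bipartiteReduction hρ hst).one_add_purity_eq_iff.1 (by
    rw [ptA_bipartiteReduction, ptB_bipartiteReduction, purity_bipartiteReduction]
    simp only [S2_eq_one_sub_purity] at h
    linarith)).1
  rw [ptA_bipartiteReduction, ptB_bipartiteReduction] at hprod
  have hentry := congrFun₂ hprod (s.restrict x, t.restrict x) (s.restrict y, t.restrict y)
  rwa [bipartiteReduction, submatrix_apply, piUnion_restrict, piUnion_restrict] at hentry

theorem S2_le_sum (hρ : IsDensity ρ) (s : Finset ι) : S2 ρ s ≤ ∑ i ∈ s, S2 ρ {i} := by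
  induction s using Finset.induction_on with
  | empty => rw [S2_empty hρ, Finset.sum_empty]
  | insert i s hi ih =>
    rw [Finset.sum_insert hi, Finset.insert_eq]
    exact (S2_union_le hρ (Finset.disjoint_singleton_left.2 hi)).trans (by gcongr)

theorem pTr_apply_eq_prod_of_S2_eq_sum (hρ : IsDensity ρ) (h : S2 ρ s = ∑ i ∈ s, S2 ρ {i})
    (x y : ∀ i, d i) :
    pTr ρ s (s.restrict x) (s.restrict y) =
      ∏ i ∈ s, pTr ρ {i} (Finset.restrict {i} x) (Finset.restrict {i} y) := by
  induction s using Finset.induction_on with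
  | empty => exact (isDensity_pTr hρ ∅).apply_of_subsingleton _ _
  | insert i s hi ih =>
    rw [Finset.sum_insert hi, Finset.insert_eq] at h
    have hdisj : Disjoint {i} s := Finset.disjoint_singleton_left.2 hi
    have hunion := S2_union_le hρ hdisj
    have hs := S2_le_sum hρ s
    rw [Finset.prod_insert hi, ← ih (by linarith), Finset.insert_eq]
    exact pTr_union_apply_of_S2_union_eq hρ hdisj (by linarith) x y

theorem purity_eq_prod_of_apply_eq_prod (hρ : IsDensity ρ)
    (h : ∀ x y, ρ x y = ∏ i, pTr ρ {i} (Finset.restrict {i} x) (Finset.restrict {i} y)) :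
    purity ρ = ∏ i, purity (pTr ρ {i}) := by
  let e (i : ι) : d i ≃ ((j : {j // j ∈ ({i} : Finset ι)}) → d j) :=
    (Equiv.piUnique fun j : {j // j ∈ ({i} : Finset ι)} => d j).symm
  let σ (i : ι) : Matrix (d i) (d i) ℂ := (pTr ρ {i}).submatrix (e i) (e i)
  have hrestrict (i : ι) (x : ∀ i, d i) : e i (x i) = Finset.restrict {i} x := by
    rw [Equiv.symm_apply_eq]
    rfl
  have hσ (x y : ∀ i, d i) : ρ x y = ∏ i, σ i (x i) (y i) := by
    simp only [h, σ, submatrix_apply, hrestrict]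
  have htrace : (ρ * ρ).trace = ∏ i, (purity (pTr ρ {i}) : ℂ) := by
    rw [trace_mul_of_apply_eq_prod hσ hσ]
    refine Finset.prod_congr rfl fun i _ => ?_
    rw [submatrix_mul_equiv, trace_submatrix_equiv,
      ofReal_purity (isDensity_pTr hρ {i}).1.isHermitian]
  rw [purity, htrace, ← Complex.ofReal_prod, Complex.ofReal_re]

theorem apply_eq_prod_of_S2_univ_eq_sum (hρ : IsDensity ρ)
    (h : S2 ρ Finset.univ = ∑ i, S2 ρ {i}) (x y : ∀ i, d i) :
    ρ x y = ∏ i, pTr ρ {i} (Finset.restrict {i} x) (Finset.restrict {i} y) := by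
  rw [← pTr_univ_apply ρ x y, pTr_apply_eq_prod_of_S2_eq_sum hρ h]

theorem sum_S2_eq_S2_univ_iff_of_apply_eq_prod (hρ : IsDensity ρ)
    (h : ∀ x y, ρ x y = ∏ i, pTr ρ {i} (Finset.restrict {i} x) (Finset.restrict {i} y)) :
    ∑ i, S2 ρ {i} = S2 ρ Finset.univ ↔ {i | 1 < (pTr ρ {i}).rank}.Subsingleton := by
  simp only [S2_eq_one_sub_purity, purity_pTr_univ, purity_eq_prod_of_apply_eq_prod hρ h,
    (isDensity_pTr hρ _).one_lt_rank_iff_purity_ne_one]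
  exact sum_one_sub_eq_one_sub_prod_iff
    (fun i => purity_nonneg (isDensity_pTr hρ {i}).1.isHermitian)
    fun i => (isDensity_pTr hρ {i}).purity_le_one

end Multipartite

/-- For every density operator `ρ^{AB}`, `1 + Tr((ρ^{AB})²) =
Tr((ρ^A)²) + Tr((ρ^B)²)` iff `ρ^{AB} = ρ^A ⊗ ρ^B` with `min(rank ρ^A, rank ρ^B) = 1`.
Consequently `I_2(A_1:⋯:A_n) = 0` iff `ρ^{A_1⋯A_n}` is a product state with at most one
reduced state `ρ^{A_i}` of rank greater than 1. -/
theorem purity_saturation_iff_product_with_pure_factor :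
    (∀ (A B : Type) [Fintype A] [DecidableEq A] [Fintype B] [DecidableEq B]
        (ρ : Matrix (A × B) (A × B) ℂ), IsDensity ρ →
      (1 + (Matrix.trace (ρ * ρ)).re
          = (Matrix.trace (ptA ρ * ptA ρ)).re + (Matrix.trace (ptB ρ * ptB ρ)).re
        ↔ ((∀ p q : A × B, ρ p q = ptA ρ p.1 q.1 * ptB ρ p.2 q.2)
            ∧ min (ptA ρ).rank (ptB ρ).rank = 1)))
    ∧ (∀ (ι : Type) [Fintype ι] [DecidableEq ι] (d : ι → Type)
        [∀ i, Fintype (d i)] [∀ i, DecidableEq (d i)]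
        (ρ : Matrix (∀ i, d i) (∀ i, d i) ℂ), IsDensity ρ →
      ((∑ i, S2 ρ {i}) - S2 ρ Finset.univ = 0
        ↔ ((∀ x y : ∀ i, d i,
              ρ x y = ∏ i, pTr ρ {i} (fun j => x j.1) (fun j => y j.1))
            ∧ {i : ι | 1 < (pTr ρ {i}).rank}.Subsingleton))) := by
  refine ⟨fun A B _ _ _ _ ρ hρ => ?_, fun ι _ _ d _ _ ρ hρ => ?_⟩
  · have hkronecker : ρ = ptA ρ ⊗ₖ ptB ρ ↔
        ∀ p q : A × B, ρ p q = ptA ρ p.1 q.1 * ptB ρ p.2 q.2 := Matrix.ext_iff.symm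
    rw [← hkronecker]
    exact hρ.one_add_purity_eq_iff
  · rw [sub_eq_zero]
    constructor
    · intro h
      have hprod := apply_eq_prod_of_S2_univ_eq_sum hρ h.symm
      exact ⟨hprod, (sum_S2_eq_S2_univ_iff_of_apply_eq_prod hρ hprod).1 h⟩
    · rintro ⟨hprod, hrank⟩
      exact (sum_S2_eq_S2_univ_iff_of_apply_eq_prod hρ hprod).2 hrank

end Stmt13
end

section
/- For q > 1 and 0 < p < 1, the three-qubit density operator ρ = p|000⟩⟨000| + (1−p)|111⟩⟨111| satisfies the Tsallis strong-subadditivity saturation S_q(AB) + S_q(BC) = S_q(ABC) + S_q(B), but S_q(AC) < S_q(A) + S_q(C); hence saturation of S_q(AB) + S_q(BC) = S_q(ABC) + S_q(B) does not imply I_q(A:C) = 0. -/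
open scoped BigOperators ComplexOrder
open Matrix

/-- The three-qubit state `ρ = p|000⟩⟨000| + (1-p)|111⟩⟨111|`. -/
noncomputable def rho17 (p : ℝ) : Matrix (∀ _ : Fin 3, Fin 2) (∀ _ : Fin 3, Fin 2) ℂ :=
  fun a b =>
    (if a = (fun _ => 0) ∧ b = (fun _ => 0) then ((p : ℂ)) else 0)
      + (if a = (fun _ => 1) ∧ b = (fun _ => 1) then ((1 - p : ℝ) : ℂ) else 0)

/-!
Tracing out parties of a mixture of the product vectors `|c⋯c⟩` leaves a mixture of the same kind
with the same weights, as long as one party remains. So all marginals of `ρ` have the same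
nonzero spectrum and hence a common Tsallis entropy `h`. Saturation of strong subadditivity then
reads `h + h = h + h`, while `I_q(A:C) = h + h - h = h`, which is positive as soon as the mixture
is nontrivial.
-/

section Diagonal

variable {n : Type*} [DecidableEq n]

theorem map_eigenvalues_diagonal [Fintype n] {𝕜 : Type*} [RCLike 𝕜] {f : n → ℝ}
    (h : (diagonal fun i => (f i : 𝕜)).IsHermitian) :
    Finset.univ.val.map h.eigenvalues = Finset.univ.val.map f := by
  have hroots : (diagonal fun i => (f i : 𝕜)).charpoly.roots
      = Finset.univ.val.map fun i => (f i : 𝕜) := by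
    rw [charpoly_diagonal, Finset.prod_eq_multiset_prod,
      ← Polynomial.roots_multiset_prod_X_sub_C (Finset.univ.val.map fun i => (f i : 𝕜)),
      Multiset.map_map]
    rfl
  rw [h.roots_charpoly_eq_eigenvalues] at hroots
  refine Multiset.map_injective (RCLike.ofReal_injective (K := 𝕜)) ?_
  rw [Multiset.map_map, Multiset.map_map]
  exact hroots

theorem sum_single_eq_diagonal_extend {κ R : Type*} [Fintype κ] [AddCommMonoid R] {e : κ → n}
    (he : e.Injective) (w : κ → R) :
    ∑ c, single (e c) (e c) (w c) = diagonal (Function.extend e w 0) := by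
  ext x y
  simp only [Matrix.sum_apply, single_apply, diagonal_apply]
  by_cases hx : ∃ c, e c = x
  · obtain ⟨c, rfl⟩ := hx
    rw [Finset.sum_eq_single c (fun b _ hb => if_neg fun h => hb (he h.1)) (by simp),
      he.extend_apply]
    simp
  · rw [Function.extend_apply' _ _ _ hx, Pi.zero_apply, ite_self]
    exact Finset.sum_eq_zero fun c _ => if_neg fun h => hx ⟨c, h.1⟩

end Diagonal

section Tsallis

variable {κ : Type*} [Fintype κ] {q : ℝ} {w : κ → ℝ}

/-- The classical Tsallis `q`-entropy `(1 - ∑ c, w c ^ q) / (q - 1)` of a weight vector `w`. It is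
the value of `tsallisEntropy` on a matrix with spectrum `w`. At `q = 1` it is the junk value `0`,
not the Shannon entropy. -/
noncomputable def classicalTsallis (q : ℝ) (w : κ → ℝ) : ℝ :=
  (1 - ∑ c, w c ^ q) / (q - 1)

theorem classicalTsallis_extend {n : Type*} [Fintype n] {e : κ → n} (he : e.Injective)
    (hq : q ≠ 0) (w : κ → ℝ) :
    classicalTsallis q (Function.extend e w 0) = classicalTsallis q w := by
  have hsum : ∑ c, w c ^ q = ∑ x, Function.extend e w 0 x ^ q := by
    refine Fintype.sum_of_injective e he _ _ (fun x hx => ?_) fun c => by rw [he.extend_apply]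
    rw [Function.extend_apply' _ _ _ hx, Pi.zero_apply, Real.zero_rpow hq]
  rw [classicalTsallis, classicalTsallis, hsum]

theorem sub_rpow_div_pos {x : ℝ} (hx0 : 0 < x) (hx1 : x < 1) (hq : q ≠ 1) :
    0 < (x - x ^ q) / (q - 1) := by
  rcases hq.lt_or_gt with hlt | hgt
  · exact div_pos_of_neg_of_neg (sub_neg.2 (Real.self_lt_rpow_of_lt_one hx0 hx1 hlt))
      (sub_neg.2 hlt)
  · exact div_pos (sub_pos.2 (Real.rpow_lt_self_of_lt_one hx0 hx1 hgt)) (sub_pos.2 hgt)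

theorem classicalTsallis_pos (hq0 : q ≠ 0) (hq1 : q ≠ 1) (hw : w ∈ stdSimplex ℝ κ)
    (hw1 : ∀ c, w c < 1) : 0 < classicalTsallis q w := by
  have hsum : classicalTsallis q w = ∑ c, (w c - w c ^ q) / (q - 1) := by
    rw [classicalTsallis, ← hw.2, ← Finset.sum_sub_distrib, Finset.sum_div]
  obtain ⟨c₀, -, hc₀⟩ : ∃ c ∈ Finset.univ, w c ≠ 0 :=
    Finset.exists_ne_zero_of_sum_ne_zero (hw.2 ▸ one_ne_zero)
  rw [hsum]
  refine Finset.sum_pos' (fun c _ => ?_)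
    ⟨c₀, Finset.mem_univ c₀, sub_rpow_div_pos ((hw.1 c₀).lt_of_ne' hc₀) (hw1 c₀) hq1⟩
  rcases (hw.1 c).eq_or_lt with hc | hc
  · simp [← hc, Real.zero_rpow hq0]
  · exact (sub_rpow_div_pos hc (hw1 c) hq1).le

theorem tsallisEntropy_diagonal {n : Type} [Fintype n] [DecidableEq n] (q : ℝ) (f : n → ℝ) :
    tsallisEntropy q (diagonal fun i => (f i : ℂ)) = classicalTsallis q f := by
  have hherm : (diagonal fun i => (f i : ℂ)).IsHermitian :=
    isHermitian_diagonal_iff.2 fun i => Complex.conj_ofReal (f i)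
  have hsum : ∑ i, hherm.eigenvalues i ^ q = ∑ i, f i ^ q := by
    simpa only [Finset.sum_eq_multiset_sum, Multiset.map_map, Function.comp_def] using
      congrArg (fun m => (m.map (· ^ q)).sum) (map_eigenvalues_diagonal hherm)
  rw [tsallisEntropy, dif_pos hherm, hsum, classicalTsallis]

end Tsallis

section PartialTrace

variable {ι : Type} [DecidableEq ι] {d : ι → Type} (s : Finset ι)

theorem eq_combine_iff (a : ∀ i, d i) (x : (i : {j // j ∈ s}) → d i.1)
    (z : (i : {j // j ∉ s}) → d i.1) :
    a = combine s x z ↔ s.restrict a = x ∧ (fun i : {j // j ∉ s} => a i.1) = z := by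
  constructor
  · rintro rfl
    constructor <;> ext i <;> simp [combine, i.2]
  · rintro ⟨rfl, rfl⟩
    ext i
    simp [combine]

variable [Fintype ι] [∀ i, Fintype (d i)]

theorem pTr_sum {κ : Type*} [Fintype κ] (ρ : κ → Matrix (∀ i, d i) (∀ i, d i) ℂ) :
    pTr (∑ c, ρ c) s = ∑ c, pTr (ρ c) s := by
  ext x y
  simp only [pTr, Matrix.sum_apply]
  exact Finset.sum_comm

theorem pTr_single [∀ i, DecidableEq (d i)] (a : ∀ i, d i) (r : ℂ) :
    pTr (single a a r) s = single (s.restrict a) (s.restrict a) r := by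
  ext x y
  simp only [pTr, single_apply, eq_combine_iff, and_and_and_comm, and_self]
  simp [ite_and]

theorem MIq_pair (q : ℝ) (ρ : Matrix (∀ i, d i) (∀ i, d i) ℂ) [∀ i, DecidableEq (d i)]
    {A C : Finset ι} (hAC : A ≠ C) : MIq q ρ {A, C} = Sq q ρ A + Sq q ρ C - Sq q ρ (A ∪ C) := by
  rw [MIq, Finset.sum_pair hAC, Finset.sup_insert, Finset.sup_singleton, id, id,
    Finset.sup_eq_union]

end PartialTrace

section CorrelatedState

variable {ι κ : Type} [Fintype ι] [DecidableEq ι] [Fintype κ] [DecidableEq κ] {q : ℝ}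
  {w : κ → ℝ}

/-- The classically correlated state `∑ c, w c • |c⋯c⟩⟨c⋯c|`, in which all the parties `ι` carry
the same basis index `c`, with weight `w c`. -/
noncomputable def correlatedState (ι : Type) [Fintype ι] (w : κ → ℝ) :
    Matrix (ι → κ) (ι → κ) ℂ :=
  ∑ c, single (Function.const ι c) (Function.const ι c) (w c : ℂ)

theorem rho17_eq_correlatedState (p : ℝ) : rho17 p = correlatedState (Fin 3) ![p, 1 - p] := by
  ext a b
  simp [rho17, correlatedState, single_apply, Function.const_def, eq_comm]

theorem pair_mem_stdSimplex {p : ℝ} (hp0 : 0 ≤ p) (hp1 : p ≤ 1) :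
    ![p, 1 - p] ∈ stdSimplex ℝ (Fin 2) := by
  simp [stdSimplex, Fin.forall_fin_two, hp0, hp1]

theorem pTr_correlatedState (w : κ → ℝ) (s : Finset ι) :
    pTr (correlatedState ι w) s = correlatedState {i // i ∈ s} w := by
  rw [correlatedState, pTr_sum]
  exact Finset.sum_congr rfl fun c _ => pTr_single s _ _

theorem tsallisEntropy_correlatedState [Nonempty ι] (hq : q ≠ 0) (w : κ → ℝ) :
    tsallisEntropy q (correlatedState ι w) = classicalTsallis q w := by
  have hconst : (Function.const ι : κ → ι → κ).Injective := Function.const_injective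
  have hdiag : correlatedState ι w
      = diagonal fun x => ((Function.extend (Function.const ι) w 0 x : ℝ) : ℂ) := by
    rw [correlatedState, sum_single_eq_diagonal_extend hconst]
    congr with x
    rw [Function.apply_extend Complex.ofReal]
    congr
  rw [hdiag, tsallisEntropy_diagonal, classicalTsallis_extend hconst hq]

theorem Sq_correlatedState (hq : q ≠ 0) (w : κ → ℝ) {s : Finset ι} (hs : s.Nonempty) :
    Sq q (correlatedState ι w) s = classicalTsallis q w := by
  have := hs.to_subtype
  rw [Sq, pTr_correlatedState, tsallisEntropy_correlatedState hq]

theorem tsallis_ssa_saturation_without_vanishing_MI_general (hq0 : 0 < q) (hq1 : q ≠ 1)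
    (hw : w ∈ stdSimplex ℝ κ) (hw1 : ∀ c, w c < 1) {A B C : Finset ι} (hA : A.Nonempty)
    (hB : B.Nonempty) (hC : C.Nonempty) (hAC : A ≠ C) :
    Sq q (correlatedState ι w) (A ∪ B) + Sq q (correlatedState ι w) (B ∪ C)
        = Sq q (correlatedState ι w) (A ∪ (B ∪ C)) + Sq q (correlatedState ι w) B
    ∧ Sq q (correlatedState ι w) (A ∪ C)
        < Sq q (correlatedState ι w) A + Sq q (correlatedState ι w) C
    ∧ MIq q (correlatedState ι w) {A, C} ≠ 0 := by
  have hS {s : Finset ι} (hs : s.Nonempty) :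
      Sq q (correlatedState ι w) s = classicalTsallis q w := Sq_correlatedState hq0.ne' w hs
  have hpos : 0 < classicalTsallis q w := classicalTsallis_pos hq0.ne' hq1 hw hw1
  rw [MIq_pair _ _ hAC, hS (hA.inl (t := B)), hS (hB.inl (t := C)), hS (hA.inl (t := B ∪ C)),
    hS (hA.inl (t := C)), hS hA, hS hB, hS hC]
  exact ⟨rfl, lt_add_of_pos_left _ hpos, by simpa using hpos.ne'⟩

end CorrelatedState

/-- For `q > 1` and `0 < p < 1`, the state `ρ = p|000⟩⟨000| + (1-p)|111⟩⟨111|`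
saturates the Tsallis strong subadditivity, `S_q(AB) + S_q(BC) = S_q(ABC) + S_q(B)`, but
`S_q(AC) < S_q(A) + S_q(C)`; hence this saturation does not imply `I_q(A:C) = 0`. -/
theorem tsallis_ssa_saturation_without_vanishing_MI
    (q p : ℝ) (hq : 1 < q) (hp0 : 0 < p) (hp1 : p < 1) :
    Sq q (rho17 p) {0, 1} + Sq q (rho17 p) {1, 2}
        = Sq q (rho17 p) {0, 1, 2} + Sq q (rho17 p) {1}
    ∧ Sq q (rho17 p) {0, 2} < Sq q (rho17 p) {0} + Sq q (rho17 p) {2}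
    ∧ MIq q (rho17 p) {({0} : Finset (Fin 3)), {2}} ≠ 0 := by
  rw [rho17_eq_correlatedState]
  exact tsallis_ssa_saturation_without_vanishing_MI_general (A := {0}) (B := {1}) (C := {2})
    (by linarith) hq.ne' (pair_mem_stdSimplex hp0.le hp1.le)
    (by simp [Fin.forall_fin_two, hp0, hp1]) (by simp) (by simp) (by simp) (by decide)
end
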